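/- Fix x₀ > 0 and L > 3x₀, let γ be the critical curve with curvature H and normal N = γ̇^⊥, and let λ = 2L/(L+x₀). Let φ, φ_τ ∈ C^∞([0,2L], ℝ) with φ(0) = φ(2L) = φ_τ(0) = φ_τ(2L) = 0, set X = φN + φ_τγ̇, γ_t = γ + tX, and define F(t) = ∫₀^{2L} |γ̇_t(s)|⁴/⟨γ̇_t(s), γ̈_t(s)^⊥⟩ ds (well defined for |t| small). Then F is twice differentiable at t = 0 and F''(0) = ∫₀^{2L} (2H φ² − 2φ̇²/H + 2φ̈²/H³) ds + λ·∫₀^{2L} (H φ_τ² + 2φ·φ̇_τ) ds − [2φ̇(s)φ̇_τ(s)/H(s)²] evaluated from s = 0 to s = 2L. -/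

import Mathlib

open Real Set Filter

noncomputable def sig (x0 L : ℝ) : ℝ := π * Real.sqrt (x0 / (L + x0))

noncomputable def kap (x0 L : ℝ) : ℝ := L / Real.sin (sig x0 L)

noncomputable def Hc (x0 L s : ℝ) : ℝ :=
  π / (sig x0 L * Real.sqrt (kap x0 L ^ 2 - (s - L) ^ 2))

noncomputable def xc (x0 L s : ℝ) : ℝ :=
  -(kap x0 L / 2) *
    ((sig x0 L / (π + sig x0 L)) *
        Real.sin (((π + sig x0 L) / sig x0 L) * Real.arcsin ((s - L) / kap x0 L)) +
      (sig x0 L / (π - sig x0 L)) *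
        Real.sin (((π - sig x0 L) / sig x0 L) * Real.arcsin ((s - L) / kap x0 L)))

noncomputable def yc (x0 L s : ℝ) : ℝ :=
  kap x0 L / 2 *
    ((sig x0 L / (π + sig x0 L)) *
        Real.cos (((π + sig x0 L) / sig x0 L) * Real.arcsin ((s - L) / kap x0 L)) +
      (sig x0 L / (π - sig x0 L)) *
        Real.cos (((π - sig x0 L) / sig x0 L) * Real.arcsin ((s - L) / kap x0 L))) +
  π * x0 / (sig x0 L * Real.tan (sig x0 L))

/-- first component of `X = φ N + φ_τ γ̇`, where `N = γ̇^⊥ = (ẏ, −ẋ)` -/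
noncomputable def Xone (x0 L : ℝ) (φ φτ : ℝ → ℝ) (s : ℝ) : ℝ :=
  φ s * deriv (yc x0 L) s + φτ s * deriv (xc x0 L) s

/-- second component of `X = φ N + φ_τ γ̇` -/
noncomputable def Xtwo (x0 L : ℝ) (φ φτ : ℝ → ℝ) (s : ℝ) : ℝ :=
  -φ s * deriv (xc x0 L) s + φτ s * deriv (yc x0 L) s

/-- `F(t) = ∫₀^{2L} |γ̇_t|⁴/⟨γ̇_t, γ̈_t^⊥⟩ ds`, the total inverse curvature of `γ_t = γ + tX` -/
noncomputable def Fvar (x0 L : ℝ) (φ φτ : ℝ → ℝ) (t : ℝ) : ℝ :=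
  ∫ s in (0:ℝ)..(2 * L),
    ((deriv (xc x0 L) s + t * deriv (Xone x0 L φ φτ) s) ^ 2 +
        (deriv (yc x0 L) s + t * deriv (Xtwo x0 L φ φτ) s) ^ 2) ^ 2 /
      ((deriv (xc x0 L) s + t * deriv (Xone x0 L φ φτ) s) *
          (deriv (deriv (yc x0 L)) s + t * deriv (deriv (Xtwo x0 L φ φτ)) s) -
        (deriv (yc x0 L) s + t * deriv (Xtwo x0 L φ φτ) s) *
          (deriv (deriv (xc x0 L)) s + t * deriv (deriv (Xone x0 L φ φτ)) s))

open intervalIntegral MeasureTheory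

lemma param (ε l : ℝ) (hl : 0 ≤ l) (f f' : ℝ → ℝ → ℝ)
    (hf : ContinuousOn (fun p : ℝ × ℝ => f p.1 p.2) (Icc (-ε) ε ×ˢ Icc 0 l))
    (hf' : ContinuousOn (fun p : ℝ × ℝ => f' p.1 p.2) (Icc (-ε) ε ×ˢ Icc 0 l))
    (hd : ∀ t ∈ Icc (-ε) ε, ∀ s ∈ Icc 0 l, HasDerivAt (fun t => f t s) (f' t s) t)
    (t : ℝ) (ht : t ∈ Ioo (-ε) ε) :
    HasDerivAt (fun t => ∫ s in (0:ℝ)..l, f t s) (∫ s in (0:ℝ)..l, f' t s) t := by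
  have hK : IsCompact (Icc (-ε) ε ×ˢ Icc 0 l) := isCompact_Icc.prod isCompact_Icc
  obtain ⟨M, hM⟩ := hK.exists_bound_of_continuousOn hf'
  have sl : ∀ g : ℝ → ℝ → ℝ, ContinuousOn (fun p : ℝ × ℝ => g p.1 p.2) (Icc (-ε) ε ×ˢ Icc 0 l) →
      ∀ t ∈ Ioo (-ε) ε, IntervalIntegrable (g t) volume 0 l := by
    intro g hg t ht
    apply ContinuousOn.intervalIntegrable
    rw [uIcc_of_le hl]
    exact hg.comp (f := fun s => (t, s)) (by fun_prop) (fun s hs => ⟨Ioo_subset_Icc_self ht, hs⟩)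
  have hnb : Ioo (-ε) ε ∈ nhds t := Ioo_mem_nhds ht.1 ht.2
  refine (hasDerivAt_integral_of_dominated_loc_of_deriv_le (bound := fun _ => M) hnb ?_ (sl f hf t ht) ?_ ?_ ?_ ?_).2
  · filter_upwards [hnb] with u hu
    have := (sl f hf u hu).aestronglyMeasurable
    rwa [uIoc_of_le hl]
  · have := (sl f' hf' t ht).aestronglyMeasurable
    rwa [uIoc_of_le hl]
  · refine Eventually.of_forall fun s hs x hx => ?_
    rw [uIoc_of_le hl] at hs
    exact hM (x, s) ⟨Ioo_subset_Icc_self hx, Ioc_subset_Icc_self hs⟩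
  · simp
  · refine Eventually.of_forall fun s hs x hx => ?_
    rw [uIoc_of_le hl] at hs
    exact hd x (Ioo_subset_Icc_self hx) s (Ioc_subset_Icc_self hs)

lemma two (l : ℝ) (hl : 0 ≤ l) (b c h d1 d2 : ℝ → ℝ)
    (hb : ContinuousOn b (Icc 0 l)) (hc : ContinuousOn c (Icc 0 l)) (hh : ContinuousOn h (Icc 0 l))
    (hd1 : ContinuousOn d1 (Icc 0 l)) (hd2 : ContinuousOn d2 (Icc 0 l))
    (hpos : ∀ s ∈ Icc 0 l, 0 < h s) :
    ∃ F' : ℝ → ℝ, (∀ᶠ t in nhds (0:ℝ), HasDerivAt (fun t => ∫ s in (0:ℝ)..l,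
      (1 + 2 * t * b s + t ^ 2 * c s) ^ 2 / (h s + t * d1 s + t ^ 2 * d2 s)) (F' t) t) ∧
    HasDerivAt F' (∫ s in (0:ℝ)..l, 2 / h s * (2 * c s + 4 * b s ^ 2 - 4 * b s * d1 s / h s
      + d1 s ^ 2 / h s ^ 2 - d2 s / h s)) 0 := by
  obtain ⟨s0, hs0, hm⟩ := isCompact_Icc.exists_isMinOn (nonempty_Icc.2 hl) hh
  obtain ⟨M1, hM1⟩ := isCompact_Icc.exists_bound_of_continuousOn hd1
  obtain ⟨M2, hM2⟩ := isCompact_Icc.exists_bound_of_continuousOn hd2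
  have hm0 := hpos s0 hs0
  have hM1' : 0 ≤ M1 := (norm_nonneg _).trans (hM1 s0 hs0)
  have hM2' : 0 ≤ M2 := (norm_nonneg _).trans (hM2 s0 hs0)
  obtain ⟨ε, hε0, hε1, hε⟩ : ∃ ε > 0, ε ≤ 1 ∧ ε * (M1 + M2) < h s0 := by
    have hden : 0 < M1 + M2 + 1 := by positivity
    refine ⟨min 1 (h s0 / (M1 + M2 + 1)), by positivity, min_le_left _ _, ?_⟩
    calc _ ≤ h s0 / (M1 + M2 + 1) * (M1 + M2) := by gcongr; exact min_le_right _ _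
      _ < h s0 := by rw [div_mul_eq_mul_div, div_lt_iff₀ hden]; nlinarith
  have hD : ∀ t ∈ Icc (-ε) ε, ∀ s ∈ Icc 0 l, 0 < h s + t * d1 s + t ^ 2 * d2 s := by
    intro t ht s hs
    have h1 := hM1 s hs
    have h2 := hM2 s hs
    have h3 : h s0 ≤ h s := hm hs
    have ht' : |t| ≤ ε := abs_le.2 ht
    have e1 : |t * d1 s| ≤ ε * M1 := by rw [abs_mul]; gcongr; exact h1
    have e2 : |t ^ 2 * d2 s| ≤ ε * M2 := by
      rw [abs_mul, abs_pow]
      gcongr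
      · nlinarith [abs_nonneg t]
      · exact h2
    have := neg_le_of_abs_le e1
    have := neg_le_of_abs_le e2
    linarith
  have cc : ∀ g : ℝ → ℝ, ContinuousOn g (Icc 0 l) →
      ContinuousOn (fun p : ℝ × ℝ => g p.2) (Icc (-ε) ε ×ˢ Icc 0 l) := fun g hg =>
    hg.comp (f := fun p : ℝ × ℝ => p.2) (by fun_prop) (fun s hs => hs.2)
  have cb := cc b hb
  have ccc := cc c hc
  have ch := cc h hh
  have c1 := cc d1 hd1
  have c2 := cc d2 hd2
  have ct : ContinuousOn (fun p : ℝ × ℝ => p.1) (Icc (-ε) ε ×ˢ Icc 0 l) := by fun_prop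
  have hmap : MapsTo (fun p : ℝ × ℝ => p.2) (Icc (-ε) ε ×ˢ Icc 0 l) (Icc 0 l) := fun p hp => hp.2
  let P : ℝ → ℝ → ℝ := fun t s => (1 + 2 * t * b s + t ^ 2 * c s) ^ 2
  let P1 : ℝ → ℝ → ℝ := fun t s => 2 * (1 + 2 * t * b s + t ^ 2 * c s) * (2 * b s + 2 * t * c s)
  let P2 : ℝ → ℝ → ℝ := fun t s => 2 * (2 * b s + 2 * t * c s) ^ 2
    + 2 * (1 + 2 * t * b s + t ^ 2 * c s) * (2 * c s)
  let D : ℝ → ℝ → ℝ := fun t s => h s + t * d1 s + t ^ 2 * d2 s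
  let D1 : ℝ → ℝ → ℝ := fun t s => d1 s + 2 * t * d2 s
  have cP : ContinuousOn (fun p : ℝ × ℝ => P p.1 p.2) (Icc (-ε) ε ×ˢ Icc 0 l) := by
    simp only [P]; fun_prop (disch := exact hmap)
  have cP1 : ContinuousOn (fun p : ℝ × ℝ => P1 p.1 p.2) (Icc (-ε) ε ×ˢ Icc 0 l) := by
    simp only [P1]; fun_prop (disch := exact hmap)
  have cP2 : ContinuousOn (fun p : ℝ × ℝ => P2 p.1 p.2) (Icc (-ε) ε ×ˢ Icc 0 l) := by
    simp only [P2]; fun_prop (disch := exact hmap)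
  have cD : ContinuousOn (fun p : ℝ × ℝ => D p.1 p.2) (Icc (-ε) ε ×ˢ Icc 0 l) := by
    simp only [D]; fun_prop (disch := exact hmap)
  have cD1 : ContinuousOn (fun p : ℝ × ℝ => D1 p.1 p.2) (Icc (-ε) ε ×ˢ Icc 0 l) := by
    simp only [D1]; fun_prop (disch := exact hmap)
  have dq : ∀ s t, HasDerivAt (fun t => 1 + 2 * t * b s + t ^ 2 * c s) (2 * b s + 2 * t * c s) t := by
    intro s t
    have := (((hasDerivAt_id t).const_mul 2).mul_const (b s)).const_add 1 |>.add
      (((hasDerivAt_id t).pow 2).mul_const (c s))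
    exact this.congr_deriv (by simp)
  have dl : ∀ s t, HasDerivAt (fun t => 2 * b s + 2 * t * c s) (2 * c s) t := by
    intro s t
    have := (((hasDerivAt_id t).const_mul 2).mul_const (c s)).const_add (2 * b s)
    exact this.congr_deriv (by simp)
  have dP : ∀ s t, HasDerivAt (fun t => P t s) (P1 t s) t := by
    intro s t
    exact ((dq s t).pow 2).congr_deriv (by simp [P1])
  have dP1 : ∀ s t, HasDerivAt (fun t => P1 t s) (P2 t s) t := by
    intro s t
    exact (((dq s t).const_mul 2).mul (dl s t)).congr_deriv (by simp only [P2]; ring)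
  have dD : ∀ s t, HasDerivAt (fun t => D t s) (D1 t s) t := by
    intro s t
    have := (((hasDerivAt_id t)).mul_const (d1 s)).const_add (h s) |>.add
      (((hasDerivAt_id t).pow 2).mul_const (d2 s))
    exact this.congr_deriv (by simp [D1])
  have dD1 : ∀ s t, HasDerivAt (fun t => D1 t s) (2 * d2 s) t := by
    intro s t
    have := (((hasDerivAt_id t).const_mul 2).mul_const (d2 s)).const_add (d1 s)
    exact this.congr_deriv (by simp)
  let f1 : ℝ → ℝ → ℝ := fun t s => (P1 t s * D t s - P t s * D1 t s) / D t s ^ 2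
  let f2 : ℝ → ℝ → ℝ := fun t s => ((P2 t s * D t s - P t s * (2 * d2 s)) * D t s ^ 2
    - (P1 t s * D t s - P t s * D1 t s) * (2 * D t s * D1 t s)) / (D t s ^ 2) ^ 2
  have hDn : ∀ p ∈ Icc (-ε) ε ×ˢ Icc 0 l, D p.1 p.2 ≠ 0 := fun p hp => (hD p.1 hp.1 p.2 hp.2).ne'
  have cf1 : ContinuousOn (fun p : ℝ × ℝ => f1 p.1 p.2) (Icc (-ε) ε ×ˢ Icc 0 l) :=
    ContinuousOn.div (by fun_prop) (by fun_prop) (fun p hp => pow_ne_zero _ (hDn p hp))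
  have cf2 : ContinuousOn (fun p : ℝ × ℝ => f2 p.1 p.2) (Icc (-ε) ε ×ˢ Icc 0 l) :=
    ContinuousOn.div (by fun_prop (disch := exact hmap)) (by fun_prop)
      (fun p hp => pow_ne_zero _ (pow_ne_zero _ (hDn p hp)))
  refine ⟨fun t => ∫ s in (0:ℝ)..l, f1 t s, ?_, ?_⟩
  · filter_upwards [Ioo_mem_nhds (neg_lt_zero.2 hε0) hε0] with t ht
    refine param ε l hl (fun t s => P t s / D t s) f1 (cP.div cD hDn) cf1 ?_ t ht
    intro t ht s hs
    exact (dP s t).div (dD s t) (hDn (t, s) ⟨ht, hs⟩)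
  · have := param ε l hl f1 f2 cf1 cf2 ?_ 0 ⟨neg_lt_zero.2 hε0, hε0⟩
    · convert this using 1
      apply integral_congr
      intro s hs
      rw [uIcc_of_le hl] at hs
      have := (hpos s hs).ne'
      simp only [f2, P, P1, P2, D, D1, mul_zero, zero_mul, add_zero, ne_eq, OfNat.ofNat_ne_zero, not_false_eq_true, zero_pow]
      field_simp
      ring
    · intro t ht s hs
      have := (((dP1 s t).mul (dD s t)).sub ((dP s t).mul (dD1 s t))).div ((dD s t).pow 2)
        (pow_ne_zero _ (hDn (t, s) ⟨ht, hs⟩))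
      refine this.congr_deriv ?_
      simp only [f2, Pi.mul_apply, Pi.sub_apply, Pi.pow_apply]
      congr 1
      push_cast
      ring

lemma curve (U : Set ℝ) (hU : IsOpen U) (L c : ℝ) (X Y H θ φ ψ : ℝ → ℝ)
    (hX : ∀ s ∈ U, HasDerivAt X (-cos (θ s)) s) (hY : ∀ s ∈ U, HasDerivAt Y (-sin (θ s)) s)
    (hθ : ∀ s ∈ U, HasDerivAt θ (H s) s)
    (hH : ∀ s ∈ U, HasDerivAt H (c * (s - L) * H s ^ 3) s)
    (hφ : ContDiff ℝ (⊤ : ℕ∞) φ) (hψ : ContDiff ℝ (⊤ : ℕ∞) ψ)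
    (s : ℝ) (hs : s ∈ U) (a b a' b' : ℝ)
    (ha : a = deriv φ s - H s * ψ s) (hb : b = deriv ψ s + H s * φ s)
    (ha' : a' = deriv (deriv φ) s - (c * (s - L) * H s ^ 3 * ψ s + H s * deriv ψ s))
    (hb' : b' = deriv (deriv ψ) s + (c * (s - L) * H s ^ 3 * φ s + H s * deriv φ s)) :
    deriv X s = - cos (θ s) ∧ deriv Y s = - sin (θ s) ∧
    deriv (deriv X) s = H s * sin (θ s) ∧ deriv (deriv Y) s = - H s * cos (θ s) ∧
    deriv (fun s => φ s * deriv Y s + ψ s * deriv X s) s = -a * sin (θ s) - b * cos (θ s) ∧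
    deriv (fun s => -φ s * deriv X s + ψ s * deriv Y s) s = a * cos (θ s) - b * sin (θ s) ∧
    deriv (deriv (fun s => φ s * deriv Y s + ψ s * deriv X s)) s =
      -(a' - H s * b) * sin (θ s) - (b' + H s * a) * cos (θ s) ∧
    deriv (deriv (fun s => -φ s * deriv X s + ψ s * deriv Y s)) s =
      (a' - H s * b) * cos (θ s) - (b' + H s * a) * sin (θ s) := by
  have dφ : ∀ s, HasDerivAt φ (deriv φ s) s := fun s =>
    (hφ.differentiable (by simp) s).hasDerivAt
  have dψ : ∀ s, HasDerivAt ψ (deriv ψ s) s := fun s =>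
    (hψ.differentiable (by simp) s).hasDerivAt
  have ddφ : ∀ s, HasDerivAt (deriv φ) (deriv (deriv φ) s) s := fun s =>
    (((contDiff_infty_iff_deriv.1 hφ).2).differentiable (by simp) s).hasDerivAt
  have ddψ : ∀ s, HasDerivAt (deriv ψ) (deriv (deriv ψ) s) s := fun s =>
    (((contDiff_infty_iff_deriv.1 hψ).2).differentiable (by simp) s).hasDerivAt
  have dX : ∀ s ∈ U, HasDerivAt (deriv X) (H s * sin (θ s)) s := by
    intro s hs
    have : HasDerivAt (fun s => -cos (θ s)) (H s * sin (θ s)) s :=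
      ((hθ s hs).cos.neg).congr_deriv (by ring)
    refine this.congr_of_eventuallyEq ?_
    filter_upwards [hU.mem_nhds hs] with u hu using (hX u hu).deriv
  have dY : ∀ s ∈ U, HasDerivAt (deriv Y) (-H s * cos (θ s)) s := by
    intro s hs
    have : HasDerivAt (fun s => -sin (θ s)) (-H s * cos (θ s)) s :=
      ((hθ s hs).sin.neg).congr_deriv (by ring)
    refine this.congr_of_eventuallyEq ?_
    filter_upwards [hU.mem_nhds hs] with u hu using (hY u hu).deriv
  have d1 : ∀ s ∈ U, HasDerivAt (fun s => φ s * deriv Y s + ψ s * deriv X s)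
      (-(deriv φ s - H s * ψ s) * sin (θ s) - (deriv ψ s + H s * φ s) * cos (θ s)) s := by
    intro s hs
    refine (((dφ s).mul (dY s hs)).add ((dψ s).mul (dX s hs))).congr_deriv ?_
    rw [(hX s hs).deriv, (hY s hs).deriv]; ring
  have d2 : ∀ s ∈ U, HasDerivAt (fun s => -φ s * deriv X s + ψ s * deriv Y s)
      ((deriv φ s - H s * ψ s) * cos (θ s) - (deriv ψ s + H s * φ s) * sin (θ s)) s := by
    intro s hs
    refine (((dφ s).neg.mul (dX s hs)).add ((dψ s).mul (dY s hs))).congr_deriv ?_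
    simp only [Pi.neg_apply]
    rw [(hX s hs).deriv, (hY s hs).deriv]; ring
  have dA : HasDerivAt (fun s => deriv φ s - H s * ψ s) a' s := by
    rw [ha']; exact (ddφ s).sub ((hH s hs).mul (dψ s))
  have dB : HasDerivAt (fun s => deriv ψ s + H s * φ s) b' s := by
    rw [hb']; exact (ddψ s).add ((hH s hs).mul (dφ s))
  refine ⟨(hX s hs).deriv, (hY s hs).deriv, (dX s hs).deriv, (dY s hs).deriv, ?_, ?_, ?_, ?_⟩
  · rw [(d1 s hs).deriv, ha, hb]
  · rw [(d2 s hs).deriv, ha, hb]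
  · apply HasDerivAt.deriv
    have : HasDerivAt (fun s => -(deriv φ s - H s * ψ s) * sin (θ s)
        - (deriv ψ s + H s * φ s) * cos (θ s))
        (-(a' - H s * b) * sin (θ s) - (b' + H s * a) * cos (θ s)) s := by
      refine ((dA.neg.mul (hθ s hs).sin).sub (dB.mul (hθ s hs).cos)).congr_deriv ?_
      simp only [Pi.neg_apply]
      rw [ha, hb]; ring
    refine this.congr_of_eventuallyEq ?_
    filter_upwards [hU.mem_nhds hs] with u hu using (d1 u hu).deriv
  · apply HasDerivAt.deriv
    have : HasDerivAt (fun s => (deriv φ s - H s * ψ s) * cos (θ s)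
        - (deriv ψ s + H s * φ s) * sin (θ s))
        ((a' - H s * b) * cos (θ s) - (b' + H s * a) * sin (θ s)) s := by
      refine ((dA.mul (hθ s hs).cos).sub (dB.mul (hθ s hs).sin)).congr_deriv ?_
      rw [ha, hb]; ring
    refine this.congr_of_eventuallyEq ?_
    filter_upwards [hU.mem_nhds hs] with u hu using (d2 u hu).deriv

lemma parts (U : Set ℝ) (L c : ℝ) (hL : 0 ≤ 2 * L) (hIU : Icc 0 (2 * L) ⊆ U) (H φ ψ : ℝ → ℝ)
    (hH : ∀ s ∈ U, HasDerivAt H (c * (s - L) * H s ^ 3) s) (hpos : ∀ s ∈ U, 0 < H s)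
    (hφ : ContDiff ℝ (⊤ : ℕ∞) φ) (hψ : ContDiff ℝ (⊤ : ℕ∞) ψ)
    (hb0 : φ 0 = 0) (hb1 : φ (2 * L) = 0) (hb2 : ψ 0 = 0) (hb3 : ψ (2 * L) = 0)
    (G : ℝ → ℝ) (hGc : ContinuousOn G (Icc 0 (2 * L)))
    (hG : ∀ s ∈ Icc 0 (2 * L), ∀ a b a' b' : ℝ, 
      a = deriv φ s - H s * ψ s → b = deriv ψ s + H s * φ s →
      a' = deriv (deriv φ) s - (c * (s - L) * H s ^ 3 * ψ s + H s * deriv ψ s) →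
      b' = deriv (deriv ψ) s + (c * (s - L) * H s ^ 3 * φ s + H s * deriv φ s) →
      G s = 2 / H s * (a ^ 2 + b ^ 2 + a' ^ 2 / H s ^ 2 + (a' * b - a * b') / H s)) :
    ∫ s in (0:ℝ)..(2 * L), G s = 
     ((∫ s in (0:ℝ)..(2 * L),
            (2 * H s * φ s ^ 2 - 2 * deriv φ s ^ 2 / H s +
              2 * deriv (deriv φ) s ^ 2 / H s ^ 3)) +
          (2 - 2 * c) *
            (∫ s in (0:ℝ)..(2 * L),
              (H s * ψ s ^ 2 + 2 * φ s * deriv ψ s)) -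
          (2 * deriv φ (2 * L) * deriv ψ (2 * L) / H (2 * L) ^ 2 -
            2 * deriv φ 0 * deriv ψ 0 / H 0 ^ 2)) := by
  have dφ : ∀ s, HasDerivAt φ (deriv φ s) s := fun s =>
    (hφ.differentiable (by simp) s).hasDerivAt
  have dψ : ∀ s, HasDerivAt ψ (deriv ψ s) s := fun s =>
    (hψ.differentiable (by simp) s).hasDerivAt
  have cdφ := (contDiff_infty_iff_deriv.1 hφ).2
  have cdψ := (contDiff_infty_iff_deriv.1 hψ).2
  have ddφ : ∀ s, HasDerivAt (deriv φ) (deriv (deriv φ) s) s := fun s =>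
    (cdφ.differentiable (by simp) s).hasDerivAt
  have ddψ : ∀ s, HasDerivAt (deriv ψ) (deriv (deriv ψ) s) s := fun s =>
    (cdψ.differentiable (by simp) s).hasDerivAt
  have c0 := hφ.continuous.continuousOn (s := Icc 0 (2 * L))
  have c1 := cdφ.continuous.continuousOn (s := Icc 0 (2 * L))
  have c2 := ((contDiff_infty_iff_deriv.1 cdφ).2).continuous.continuousOn (s := Icc 0 (2 * L))
  have e0 := hψ.continuous.continuousOn (s := Icc 0 (2 * L))
  have e1 := cdψ.continuous.continuousOn (s := Icc 0 (2 * L))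
  have cH : ContinuousOn H (Icc 0 (2 * L)) := fun s hs =>
    (hH s (hIU hs)).continuousAt.continuousWithinAt
  have hn : ∀ s ∈ Icc 0 (2 * L), H s ≠ 0 := fun s hs => (hpos s (hIU hs)).ne'
  have i1 : ContinuousOn (fun s => 2 * H s * φ s ^ 2 - 2 * deriv φ s ^ 2 / H s +
              2 * deriv (deriv φ) s ^ 2 / H s ^ 3) (Icc 0 (2 * L)) := by
    refine ContinuousOn.add (ContinuousOn.sub (by fun_prop) ?_) ?_
    · exact ContinuousOn.div (by fun_prop) cH hn
    · exact ContinuousOn.div (by fun_prop) (by fun_prop) (fun s hs => pow_ne_zero _ (hn s hs))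
  have i2 : ContinuousOn (fun s => H s * ψ s ^ 2 + 2 * φ s * deriv ψ s) (Icc 0 (2 * L)) := by
    fun_prop
  have ii : ∀ f : ℝ → ℝ, ContinuousOn f (Icc 0 (2 * L)) →
      IntervalIntegrable f volume 0 (2 * L) := by
    intro f hf
    apply ContinuousOn.intervalIntegrable
    rwa [uIcc_of_le hL]
  let B : ℝ → ℝ := fun s => 2 * (ψ s * deriv ψ s) / H s + 2 * c * (s - L) * H s * ψ s ^ 2
    + 2 * (φ s * deriv φ s) / H s - 2 * (deriv φ s * deriv ψ s) / H s ^ 2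
    - 4 * c * (s - L) * (deriv φ s * ψ s) - (2 - 4 * c) * (φ s * ψ s)
  have key := integral_eq_sub_of_hasDerivAt (a := 0) (b := 2 * L) (f := B)
    (f' := fun s => G s - ((2 * H s * φ s ^ 2 - 2 * deriv φ s ^ 2 / H s +
              2 * deriv (deriv φ) s ^ 2 / H s ^ 3) +
              (2 - 2 * c) * (H s * ψ s ^ 2 + 2 * φ s * deriv ψ s))) ?_ ?_
  · rw [integral_sub (ii _ hGc) ((ii _ i1).add ((ii _ i2).const_mul _)),
      integral_add (ii _ i1) ((ii _ i2).const_mul _), intervalIntegral.integral_const_mul] at key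
    simp only [B, hb0, hb1, hb2, hb3] at key
    have k2 := sub_eq_iff_eq_add.1 key
    rw [k2]
    ring
  · intro s hs
    rw [uIcc_of_le hL] at hs
    have h0 := hn s hs
    have dH := hH s (hIU hs)
    rw [hG s hs _ _ _ _ rfl rfl rfl rfl]
    have dw : HasDerivAt (fun s : ℝ => s - L) 1 s := (hasDerivAt_id s).sub_const L
    have := (((((((((dψ s).mul (ddψ s)).const_mul 2).div dH h0).add
      (((dw.const_mul (2 * c)).mul dH).mul ((dψ s).pow 2))).add
      ((((dφ s).mul (ddφ s)).const_mul 2).div dH h0)).sub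
      ((((ddφ s).mul (ddψ s)).const_mul 2).div (dH.pow 2) (pow_ne_zero 2 h0))).sub
      ((dw.const_mul (4 * c)).mul ((ddφ s).mul (dψ s)))).sub
      (((dφ s).mul (dψ s)).const_mul (2 - 4 * c)))
    refine this.congr_deriv ?_
    simp only [Pi.mul_apply, Pi.pow_apply]
    field_simp
    push_cast
    ring
  · exact (ii _ hGc).sub ((ii _ i1).add ((ii _ i2).const_mul _))

lemma sig_facts (x0 L : ℝ) (hx0 : 0 < x0) (hL : 3 * x0 < L) :
    0 < sig x0 L ∧ sig x0 L < π / 2 ∧ L < kap x0 L ∧ sig x0 L ^ 2 / π ^ 2 = x0 / (L + x0) := by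
  have hp : 0 < x0 / (L + x0) := by apply div_pos <;> linarith
  have hlt : √(x0 / (L + x0)) < 1 / 2 := by
    rw [Real.sqrt_lt' (by norm_num), div_lt_iff₀ (by linarith)]; linarith
  have h0 : 0 < sig x0 L := mul_pos pi_pos (Real.sqrt_pos.2 hp)
  have h1 : sig x0 L < π / 2 := by
    unfold sig; nlinarith [pi_pos]
  refine ⟨h0, h1, ?_, ?_⟩
  · have hs : 0 < sin (sig x0 L) := sin_pos_of_pos_of_lt_pi h0 (by linarith [pi_pos])
    have hs1 : sin (sig x0 L) < 1 := by
      rw [← sin_pi_div_two]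
      exact sin_lt_sin_of_lt_of_le_pi_div_two (by linarith) le_rfl h1
    unfold kap
    rw [lt_div_iff₀ hs]
    nlinarith
  · unfold sig
    rw [mul_pow, Real.sq_sqrt hp.le]
    field_simp

noncomputable def th (x0 L s : ℝ) : ℝ := π / sig x0 L * Real.arcsin ((s - L) / kap x0 L)

lemma derivs (x0 L : ℝ) (hx0 : 0 < x0) (hL : 3 * x0 < L) (s : ℝ)
    (hs : s ∈ Ioo (L - kap x0 L) (L + kap x0 L)) :
    0 < Hc x0 L s ∧ HasDerivAt (th x0 L) (Hc x0 L s) s ∧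
    HasDerivAt (xc x0 L) (-cos (th x0 L s)) s ∧ HasDerivAt (yc x0 L) (-sin (th x0 L s)) s ∧
    HasDerivAt (Hc x0 L) (sig x0 L ^ 2 / π ^ 2 * (s - L) * Hc x0 L s ^ 3) s := by
  obtain ⟨h0, h1, h2, -⟩ := sig_facts x0 L hx0 hL
  have hk : 0 < kap x0 L := by linarith
  have hpi := pi_pos
  obtain ⟨hs1, hs2⟩ := hs
  have hq : 0 < kap x0 L ^ 2 - (s - L) ^ 2 := by nlinarith
  have hr : 0 < √(kap x0 L ^ 2 - (s - L) ^ 2) := Real.sqrt_pos.2 hq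
  have hr2 : √(kap x0 L ^ 2 - (s - L) ^ 2) ^ 2 = kap x0 L ^ 2 - (s - L) ^ 2 := Real.sq_sqrt hq.le
  have hrw : √(1 - ((s - L) / kap x0 L) ^ 2) = √(kap x0 L ^ 2 - (s - L) ^ 2) / kap x0 L := by
    rw [show 1 - ((s - L) / kap x0 L) ^ 2 = (kap x0 L ^ 2 - (s - L) ^ 2) / kap x0 L ^ 2 by
      field_simp, Real.sqrt_div hq.le, Real.sqrt_sq hk.le]
  have hw1 : (s - L) / kap x0 L ≠ -1 := by
    intro h; rw [div_eq_iff hk.ne'] at h; linarith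
  have hw2 : (s - L) / kap x0 L ≠ 1 := by
    intro h; rw [div_eq_iff hk.ne'] at h; linarith
  have du : HasDerivAt (fun s => arcsin ((s - L) / kap x0 L))
      (1 / √(kap x0 L ^ 2 - (s - L) ^ 2)) s := by
    have dw : HasDerivAt (fun s : ℝ => (s - L) / kap x0 L) (1 / kap x0 L) s :=
      ((hasDerivAt_id s).sub_const L).div_const _
    refine ((hasDerivAt_arcsin hw1 hw2).comp s dw).congr_deriv ?_
    rw [hrw]; field_simp
  have hcu : cos (arcsin ((s - L) / kap x0 L)) = √(kap x0 L ^ 2 - (s - L) ^ 2) / kap x0 L := by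
    rw [cos_arcsin, hrw]
  have hplus : (π + sig x0 L) / sig x0 L * arcsin ((s - L) / kap x0 L) =
      th x0 L s + arcsin ((s - L) / kap x0 L) := by unfold th; field_simp
  have hminus : (π - sig x0 L) / sig x0 L * arcsin ((s - L) / kap x0 L) =
      th x0 L s - arcsin ((s - L) / kap x0 L) := by unfold th; field_simp
  have hmn : π - sig x0 L ≠ 0 := by linarith
  have hpn : π + sig x0 L ≠ 0 := by linarith
  refine ⟨?_, ?_, ?_, ?_, ?_⟩
  · unfold Hc; positivity
  · refine (du.const_mul (π / sig x0 L)).congr_deriv ?_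
    unfold Hc; field_simp
  · have := ((((du.const_mul ((π + sig x0 L) / sig x0 L)).sin.const_mul
      (sig x0 L / (π + sig x0 L))).add
      ((du.const_mul ((π - sig x0 L) / sig x0 L)).sin.const_mul
      (sig x0 L / (π - sig x0 L)))).const_mul (-(kap x0 L / 2)))
    refine this.congr_deriv ?_
    rw [hplus, hminus, cos_add, cos_sub, hcu]
    field_simp
    ring
  · have := ((((du.const_mul ((π + sig x0 L) / sig x0 L)).cos.const_mul
      (sig x0 L / (π + sig x0 L))).add
      ((du.const_mul ((π - sig x0 L) / sig x0 L)).cos.const_mul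
      (sig x0 L / (π - sig x0 L)))).const_mul (kap x0 L / 2)).add_const
        (π * x0 / (sig x0 L * Real.tan (sig x0 L)))
    refine this.congr_deriv ?_
    rw [hplus, hminus, sin_add, sin_sub, hcu]
    field_simp
    ring
  · have dq : HasDerivAt (fun s => kap x0 L ^ 2 - (s - L) ^ 2) (-(2 * (s - L))) s := by
      refine ((((hasDerivAt_id s).sub_const L).pow 2).const_sub _).congr_deriv ?_
      simp
    refine ((((dq.sqrt hq.ne').const_mul (sig x0 L)).fun_inv (by positivity)).const_mul
      π).congr_deriv ?_
    unfold Hc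
    field_simp

/-- second variation of the total inverse curvature at the critical curve, for a
geodesic variation with velocity `X = φN + φ_τ γ̇`, with `λ = 2L/(L+x₀)`. -/
theorem statement11 (x0 L : ℝ) (hx0 : 0 < x0) (hL : 3 * x0 < L) (φ φτ : ℝ → ℝ)
    (hφ : ContDiff ℝ (⊤ : ℕ∞) φ) (hφτ : ContDiff ℝ (⊤ : ℕ∞) φτ)
    (hb0 : φ 0 = 0) (hb1 : φ (2 * L) = 0) (hb2 : φτ 0 = 0) (hb3 : φτ (2 * L) = 0) :
    ∃ F' : ℝ → ℝ,
      (∀ᶠ t in nhds (0:ℝ), HasDerivAt (Fvar x0 L φ φτ) (F' t) t) ∧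
      HasDerivAt F'
        ((∫ s in (0:ℝ)..(2 * L),
            (2 * Hc x0 L s * φ s ^ 2 - 2 * deriv φ s ^ 2 / Hc x0 L s +
              2 * deriv (deriv φ) s ^ 2 / Hc x0 L s ^ 3)) +
          2 * L / (L + x0) *
            (∫ s in (0:ℝ)..(2 * L),
              (Hc x0 L s * φτ s ^ 2 + 2 * φ s * deriv φτ s)) -
          (2 * deriv φ (2 * L) * deriv φτ (2 * L) / Hc x0 L (2 * L) ^ 2 -
            2 * deriv φ 0 * deriv φτ 0 / Hc x0 L 0 ^ 2))
        0 := by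
  obtain ⟨h0, h1, h2, h3⟩ := sig_facts x0 L hx0 hL
  have hL0 : 0 ≤ 2 * L := by linarith
  have hden : L + x0 ≠ 0 := by linarith
  have hD := derivs x0 L hx0 hL
  rw [h3] at hD
  have hlam : 2 * L / (L + x0) = 2 - 2 * (x0 / (L + x0)) := by field_simp; ring
  rw [hlam]
  generalize x0 / (L + x0) = c at hD
  have hIU : Icc 0 (2 * L) ⊆ Ioo (L - kap x0 L) (L + kap x0 L) := fun s hs =>
    ⟨by linarith [hs.1], by linarith [hs.2]⟩
  have cdφ := (contDiff_infty_iff_deriv.1 hφ).2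
  have cdψ := (contDiff_infty_iff_deriv.1 hφτ).2
  have c0 := hφ.continuous.continuousOn (s := Icc 0 (2 * L))
  have c1 := cdφ.continuous.continuousOn (s := Icc 0 (2 * L))
  have c2 := ((contDiff_infty_iff_deriv.1 cdφ).2).continuous.continuousOn (s := Icc 0 (2 * L))
  have e0 := hφτ.continuous.continuousOn (s := Icc 0 (2 * L))
  have e1 := cdψ.continuous.continuousOn (s := Icc 0 (2 * L))
  have e2 := ((contDiff_infty_iff_deriv.1 cdψ).2).continuous.continuousOn (s := Icc 0 (2 * L))
  have cH : ContinuousOn (Hc x0 L) (Icc 0 (2 * L)) := fun s hs =>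
    (hD s (hIU hs)).2.2.2.2.continuousAt.continuousWithinAt
  have hn : ∀ s ∈ Icc 0 (2 * L), Hc x0 L s ≠ 0 := fun s hs => (hD s (hIU hs)).1.ne'
  let A : ℝ → ℝ := fun s => deriv φ s - Hc x0 L s * φτ s
  let B : ℝ → ℝ := fun s => deriv φτ s + Hc x0 L s * φ s
  let A' : ℝ → ℝ := fun s => deriv (deriv φ) s -
    (c * (s - L) * Hc x0 L s ^ 3 * φτ s + Hc x0 L s * deriv φτ s)
  let B' : ℝ → ℝ := fun s => deriv (deriv φτ) s +
    (c * (s - L) * Hc x0 L s ^ 3 * φ s + Hc x0 L s * deriv φ s)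
  have cA : ContinuousOn A (Icc 0 (2 * L)) := by simp only [A]; fun_prop
  have cB : ContinuousOn B (Icc 0 (2 * L)) := by simp only [B]; fun_prop
  have cA' : ContinuousOn A' (Icc 0 (2 * L)) := by simp only [A']; fun_prop
  have cB' : ContinuousOn B' (Icc 0 (2 * L)) := by simp only [B']; fun_prop
  obtain ⟨F', hF1, hF2⟩ := two (2 * L) hL0 B (fun s => A s ^ 2 + B s ^ 2) (Hc x0 L)
    (fun s => 2 * Hc x0 L s * B s - A' s)
    (fun s => Hc x0 L s * B s ^ 2 - A' s * B s + A s * B' s + Hc x0 L s * A s ^ 2)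
    cB (by fun_prop) cH (by fun_prop) (by fun_prop) (fun s hs => (hD s (hIU hs)).1)
  refine ⟨F', ?_, ?_⟩
  · have hFeq : Fvar x0 L φ φτ = fun t => ∫ s in (0:ℝ)..(2 * L),
        (1 + 2 * t * B s + t ^ 2 * (A s ^ 2 + B s ^ 2)) ^ 2 /
        (Hc x0 L s + t * (2 * Hc x0 L s * B s - A' s) + t ^ 2 *
          (Hc x0 L s * B s ^ 2 - A' s * B s + A s * B' s + Hc x0 L s * A s ^ 2)) := by
      funext t
      unfold Fvar
      apply integral_congr
      intro s hs
      rw [uIcc_of_le hL0] at hs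
      obtain ⟨q1, q2, q3, q4, q5, q6, q7, q8⟩ := curve _ isOpen_Ioo L c (xc x0 L) (yc x0 L) (Hc x0 L)
        (th x0 L) φ φτ (fun s hs => (hD s hs).2.2.1) (fun s hs => (hD s hs).2.2.2.1)
        (fun s hs => (hD s hs).2.1) (fun s hs => (hD s hs).2.2.2.2) hφ hφτ s (hIU hs)
        (A s) (B s) (A' s) (B' s) rfl rfl rfl rfl
      have w1 : Xone x0 L φ φτ = fun s => φ s * deriv (yc x0 L) s + φτ s * deriv (xc x0 L) s := rfl
      have w2 : Xtwo x0 L φ φτ = fun s => -φ s * deriv (xc x0 L) s + φτ s * deriv (yc x0 L) s := rfl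
      simp only [w1, w2]
      rw [q1, q2, q3, q4, q5, q6, q7, q8]
      have hsc : sin (th x0 L s) ^ 2 = 1 - cos (th x0 L s) ^ 2 := by
        rw [← sin_sq_add_cos_sq (th x0 L s)]; ring
      congr 1
      · congr 1
        ring_nf
        rw [hsc]
        ring
      · ring_nf
        rw [hsc]
        ring
    rw [hFeq]
    exact hF1
  · refine hF2.congr_deriv ?_
    refine parts _ L c hL0 hIU (Hc x0 L) φ φτ (fun s hs => (hD s hs).2.2.2.2)
      (fun s hs => (hD s hs).1) hφ hφτ hb0 hb1 hb2 hb3 _ ?_ ?_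
    · have k1 := cH.inv₀ hn
      simp only [div_eq_mul_inv, ← inv_pow]
      fun_prop
    · intro s hs a b a' b' ha hb ha' hb'
      have ea : A s = a := ha.symm
      have eb : B s = b := hb.symm
      have ea' : A' s = a' := ha'.symm
      have eb' : B' s = b' := hb'.symm
      have := hn s hs
      simp only [ea, eb, ea', eb']
      field_simp
      ring
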